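/- For all integers k, l, m with k ≥ l ≥ 1 and m ≥ max(k, 3), the graph G(k,l,m) is Feder-(k,l)-anonymous. -/

import Mathlib

/-- The graph `G(k,l,m)` of Feder et al.'s criticism: a clique on `v_0,…,v_{k-1}`
(the `Sum.inl` vertices), a cycle on `u_0,…,u_{m-1}` (the `Sum.inr` vertices), and
edges joining every cycle vertex `u_i` to the clique vertices `v_0,…,v_{l-1}`. -/
def Gklm (k l m : ℕ) : SimpleGraph (Fin k ⊕ Fin m) where
  Adj x y :=
    match x, y with
    | Sum.inl i, Sum.inl j => i ≠ j
    | Sum.inl j, Sum.inr _ => (j : ℕ) < l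
    | Sum.inr _, Sum.inl j => (j : ℕ) < l
    | Sum.inr i, Sum.inr j =>
        i ≠ j ∧ ((j : ℕ) = ((i : ℕ) + 1) % m ∨ (i : ℕ) = ((j : ℕ) + 1) % m)
  symm := by
    constructor
    rintro (i | i) (j | j) h
    · exact h.symm
    · exact h
    · exact h
    · exact ⟨h.1.symm, h.2.symm⟩
  loopless := by
    constructor
    rintro (i | i) h
    · exact h rfl
    · exact h.1 rfl

/-- A finite simple graph is Feder-`(k,l)`-anonymous if for every vertex `v` there is a set
`U` of at least `k` vertices, not containing `v`, such that every `u ∈ U` shares at least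
`l` neighbors with `v`. -/
def federAnonymous {V : Type*} (G : SimpleGraph V) (k l : ℕ) : Prop :=
  ∀ v : V, ∃ U : Set V, v ∉ U ∧ k ≤ U.ncard ∧
    ∀ u ∈ U, l ≤ (G.neighborSet u ∩ G.neighborSet v).ncard

theorem le_ncard_of_inj {V : Type*} [Finite V] {n : ℕ} (S : Set V) (f : Fin n → V)
    (hf : Function.Injective f) (h : ∀ t, f t ∈ S) : n ≤ S.ncard := by
  have h1 : (Set.range f).ncard = n := by
    rw [← Set.image_univ, Set.ncard_image_of_injective _ hf, Set.ncard_univ, Nat.card_fin]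
  rw [← h1]
  apply Set.ncard_le_ncard _ (Set.toFinite S)
  rintro _ ⟨t, rfl⟩
  exact h t

theorem common_uv (k l m : ℕ) (hkl : l ≤ k) (hm : 3 ≤ m) (i : Fin m) (j : Fin k) :
    l ≤ ((Gklm k l m).neighborSet (Sum.inr i) ∩ (Gklm k l m).neighborSet (Sum.inl j)).ncard := by
  have hlt : ((i : ℕ) + 1) % m < m := Nat.mod_lt _ (by omega)
  apply le_ncard_of_inj _ (fun t : Fin l => if (t : ℕ) = j then Sum.inr ⟨((i : ℕ) + 1) % m, hlt⟩
    else Sum.inl ⟨t, by omega⟩)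
  · intro a b hab
    apply Fin.ext
    try dsimp only at hab
    split_ifs at hab with h1 h2 h2
    · omega
    · simpa using hab
  · intro t
    try dsimp only
    split_ifs with h
    · refine ⟨⟨?_, Or.inl rfl⟩, ?_⟩
      · intro e
        have e' : (i : ℕ) = ((i : ℕ) + 1) % m := congrArg Fin.val e
        rcases Nat.lt_or_ge ((i : ℕ) + 1) m with h3 | h3
        · rw [Nat.mod_eq_of_lt h3] at e'
          omega
        · have h4 : (i : ℕ) + 1 = m := by omega
          rw [h4, Nat.mod_self] at e'
          omega
      · change (j : ℕ) < l
        omega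
    · refine ⟨?_, ?_⟩
      · change (t : ℕ) < l
        exact t.2
      · change j ≠ _
        intro e
        exact h (congrArg Fin.val e).symm

theorem common_uu (k l m : ℕ) (hkl : l ≤ k) (i j : Fin m) :
    l ≤ ((Gklm k l m).neighborSet (Sum.inr i) ∩ (Gklm k l m).neighborSet (Sum.inr j)).ncard := by
  apply le_ncard_of_inj _ (fun t : Fin l => Sum.inl ⟨t, by omega⟩)
  · intro a b hab
    apply Fin.ext
    simpa using hab
  · intro t
    exact ⟨t.2, t.2⟩

theorem stmt_13 (k l m : ℕ) (hkl : l ≤ k) (hl : 1 ≤ l) (hm : max k 3 ≤ m) :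
    federAnonymous (Gklm k l m) k l := by
  have hkm : k ≤ m := le_trans (le_max_left _ _) hm
  have h3m : 3 ≤ m := le_trans (le_max_right _ _) hm
  rintro (j | i)
  · refine ⟨Set.range Sum.inr, by simp, le_trans hkm ?_, ?_⟩
    · exact le_ncard_of_inj _ Sum.inr Sum.inr_injective (fun t => ⟨t, rfl⟩)
    · rintro _ ⟨i, rfl⟩
      exact common_uv k l m hkl h3m i j
  · let f : Fin m → Fin k ⊕ Fin m := fun t => if t = i then Sum.inl ⟨0, by omega⟩ else Sum.inr t
    refine ⟨Set.range f, ?_, le_trans hkm ?_, ?_⟩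
    · rintro ⟨t, ht⟩
      dsimp only [f] at ht
      split_ifs at ht with h
      exact h (Sum.inr_injective ht)
    · refine le_ncard_of_inj _ f ?_ (fun t => ⟨t, rfl⟩)
      intro a b hab
      dsimp only [f] at hab
      split_ifs at hab with h1 h2 h2
      · rw [h1, h2]
      · exact Sum.inr_injective hab
    · rintro _ ⟨t, rfl⟩
      dsimp only [f]
      split_ifs with h
      · rw [Set.inter_comm]
        exact common_uv k l m hkl h3m i _
      · exact common_uu k l m hkl t i
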